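/- arXiv:1707.09563 — 2 statements merged into one kernel-verified Lean document; each statement's English description precedes it below -/
import Mathlib

section
/- Let U be a real random variable with law μ_U and continuous cdf F_U, and let X be a {0,1}-valued random variable on the same probability space with p_x = P(X = x) and p_1 ∈ (0,1). Suppose X is c-dependent with U for some c ∈ [0,1]. Then for each x ∈ {0,1} and every u ∈ ℝ, P(U ≤ u | X = x) ≥ max{ F_U(u) − (c/p_x)·min{F_U(u), 1 − F_U(u)}, (F_U(u) − 1)/p_x + 1, 0 }. -/
open MeasureTheory Set

noncomputable section

/-- `X` is `c`-dependent with the real random variable `V`: there is a measurable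
version `g` of `v ↦ P(X = 1 ∣ V = v)` taking values in `[0,1]` such that
`|g(v) - P(X = 1)| ≤ c` for `μ_V`-almost every `v`. -/
def CDep {Ω : Type*} [MeasurableSpace Ω] (P : Measure Ω) (X : Ω → ℕ) (V : Ω → ℝ)
    (c : ℝ) : Prop :=
  ∃ g : ℝ → ℝ, Measurable g ∧ (∀ v, 0 ≤ g v ∧ g v ≤ 1) ∧
    (∀ A : Set ℝ, MeasurableSet A →
      (P ({ω | X ω = 1} ∩ V ⁻¹' A)).toReal = ∫ v in A, g v ∂(Measure.map V P)) ∧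
    (∀ᵐ v ∂(Measure.map V P), |g v - (P {ω | X ω = 1}).toReal| ≤ c)

/-!
The covariance of two events changes sign when either event is replaced by its complement.
Integrating `|P(X = 1 ∣ U) - p₁| ≤ c` over `U ∈ A` bounds the covariance of `X = 1` and `U ∈ A`
by `c P(U ∈ A)`. The bound for `Aᶜ` and the sign symmetry give `c min (P(U ∈ A), P(U ∉ A))`, for
`X = 0` as well as for `X = 1`; dividing by `p_x` yields the first term of the maximum. The second
term is Bonferroni's inequality `P(S) + P(T) - 1 ≤ P(S ∩ T)`.
-/

section EventCov

variable {Ω : Type*} [MeasurableSpace Ω] {P : Measure Ω} {S T : Set Ω}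

/-- The covariance of the events `S` and `T`, that is, of their indicator functions under the
probability measure `P`; it measures how far the events are from being independent. Written with
real-valued measures of sets, so that no integrability or measurability is built in. -/
def eventCov (P : Measure Ω) (S T : Set Ω) : ℝ :=
  P.real (S ∩ T) - P.real S * P.real T

lemma eventCov_comm (P : Measure Ω) (S T : Set Ω) : eventCov P S T = eventCov P T S := by
  rw [eventCov, eventCov, inter_comm, mul_comm]

lemma eventCov_compl_left [IsProbabilityMeasure P] (hS : MeasurableSet S) :
    eventCov P Sᶜ T = -eventCov P S T := by
  have hsplit : P.real (S ∩ T) + P.real (Sᶜ ∩ T) = P.real T := by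
    rw [inter_comm S, ← sdiff_eq_compl_inter, measureReal_inter_add_sdiff hS]
  rw [eventCov, eventCov, probReal_compl_eq_one_sub hS]
  linear_combination hsplit

lemma eventCov_compl_right [IsProbabilityMeasure P] (hT : MeasurableSet T) :
    eventCov P S Tᶜ = -eventCov P S T := by
  rw [eventCov_comm, eventCov_compl_left hT, eventCov_comm]

lemma sub_div_le_measureReal_inter_div {d : ℝ} (hT : 0 < P.real T)
    (hd : -d ≤ eventCov P S T) :
    P.real S - d / P.real T ≤ P.real (S ∩ T) / P.real T := by
  rw [eventCov] at hd
  rw [sub_le_iff_le_add, ← add_div, le_div_iff₀ hT]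
  linarith

lemma measureReal_add_sub_one_le_inter [IsProbabilityMeasure P] (hT : MeasurableSet T) :
    P.real S + P.real T - 1 ≤ P.real (S ∩ T) := by
  have hunion : P.real (S ∪ T) ≤ 1 := measureReal_le_one
  linarith [measureReal_union_add_inter (μ := P) (s := S) hT]

lemma sub_one_div_add_one_le_measureReal_inter_div [IsProbabilityMeasure P]
    (hT : MeasurableSet T) (hT_pos : 0 < P.real T) :
    (P.real S - 1) / P.real T + 1 ≤ P.real (S ∩ T) / P.real T := by
  rw [div_add_one hT_pos.ne']
  gcongr
  linarith [measureReal_add_sub_one_le_inter (P := P) (S := S) hT]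

end EventCov

lemma abs_setIntegral_sub_mul_le {α : Type*} [MeasurableSpace α] {μ : Measure α} {s : Set α}
    {f : α → ℝ} {a c : ℝ} (hμs : μ s ≠ ⊤) (hf : IntegrableOn f s μ)
    (hfa : ∀ᵐ x ∂μ, x ∈ s → |f x - a| ≤ c) :
    |∫ x in s, f x ∂μ - a * μ.real s| ≤ c * μ.real s := by
  have hcenter : ∫ x in s, (f x - a) ∂μ = ∫ x in s, f x ∂μ - a * μ.real s := by
    rw [integral_sub hf (integrableOn_const hμs), setIntegral_const, smul_eq_mul, mul_comm]
  simp only [← hcenter, ← Real.norm_eq_abs] at hfa ⊢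
  exact norm_setIntegral_le_of_norm_le_const_ae' hμs.lt_top hfa

lemma setOf_eq_zero_eq_compl {α : Type*} {X : α → ℕ} (hX01 : ∀ a, X a ≤ 1) :
    {a | X a = 0} = {a | X a = 1}ᶜ := by
  ext a
  have := hX01 a
  simp only [mem_ofPred_eq, mem_compl_iff]
  omega

section BinaryVariable

variable {Ω : Type*} [MeasurableSpace Ω] {P : Measure Ω} {X : Ω → ℕ} {x : ℕ}

lemma measureReal_setOf_eq_pos [IsProbabilityMeasure P] (hX : Measurable X)
    (hX01 : ∀ ω, X ω ≤ 1) (hp : P.real {ω | X ω = 1} ∈ Ioo (0 : ℝ) 1) (hx : x ≤ 1) :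
    0 < P.real {ω | X ω = x} := by
  obtain rfl | rfl := Nat.le_one_iff_eq_zero_or_eq_one.1 hx
  · have hX1 : MeasurableSet {ω | X ω = 1} := hX (measurableSet_singleton 1)
    rw [setOf_eq_zero_eq_compl hX01, probReal_compl_eq_one_sub hX1]
    exact sub_pos.2 hp.2
  · exact hp.1

namespace CDep

variable {V : Ω → ℝ} {c : ℝ} {A : Set ℝ}

lemma abs_eventCov_one_le [IsFiniteMeasure P] (h : CDep P X V c) (hV : Measurable V)
    (hA : MeasurableSet A) :
    |eventCov P {ω | X ω = 1} (V ⁻¹' A)| ≤ c * P.real (V ⁻¹' A) := by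
  obtain ⟨g, hg, hg01, hg_setIntegral, hg_dist⟩ := h
  have hg_int : Integrable g (P.map V) := .of_mem_Icc 0 1 hg.aemeasurable (.of_forall hg01)
  have hcond : P.real ({ω | X ω = 1} ∩ V ⁻¹' A) = ∫ v in A, g v ∂(P.map V) := hg_setIntegral A hA
  rw [eventCov, hcond, ← map_measureReal_apply hV hA]
  exact abs_setIntegral_sub_mul_le (measure_ne_top _ _) hg_int.integrableOn
    (hg_dist.mono fun _ hv _ => hv)

lemma abs_eventCov_le [IsProbabilityMeasure P] (h : CDep P X V c) (hV : Measurable V)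
    (hX : Measurable X) (hX01 : ∀ ω, X ω ≤ 1) (hx : x ≤ 1) (hA : MeasurableSet A) :
    |eventCov P {ω | X ω = x} (V ⁻¹' A)| ≤ c * P.real (V ⁻¹' A) := by
  obtain rfl | rfl := Nat.le_one_iff_eq_zero_or_eq_one.1 hx
  · have hX1 : MeasurableSet {ω | X ω = 1} := hX (measurableSet_singleton 1)
    rw [setOf_eq_zero_eq_compl hX01, eventCov_compl_left hX1, abs_neg]
    exact h.abs_eventCov_one_le hV hA
  · exact h.abs_eventCov_one_le hV hA

lemma abs_eventCov_le_mul_min [IsProbabilityMeasure P] (h : CDep P X V c) (hV : Measurable V)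
    (hX : Measurable X) (hX01 : ∀ ω, X ω ≤ 1) (hx : x ≤ 1) (hA : MeasurableSet A) :
    |eventCov P {ω | X ω = x} (V ⁻¹' A)|
      ≤ c * min (P.real (V ⁻¹' A)) (1 - P.real (V ⁻¹' A)) := by
  have hcompl := h.abs_eventCov_le hV hX hX01 hx hA.compl
  rw [preimage_compl, eventCov_compl_right (hV hA), abs_neg,
    probReal_compl_eq_one_sub (hV hA)] at hcompl
  obtain hmin | hmin := min_choice (P.real (V ⁻¹' A)) (1 - P.real (V ⁻¹' A)) <;> rw [hmin]
  · exact h.abs_eventCov_le hV hX hX01 hx hA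
  · exact hcompl

end CDep

theorem cdf_lower_bound_c_dep_general [IsProbabilityMeasure P] {U : Ω → ℝ} {c : ℝ} {A : Set ℝ}
    (hU : Measurable U) (hX : Measurable X) (hX01 : ∀ ω, X ω ≤ 1) (hdep : CDep P X U c)
    (hx : x ≤ 1) (hpx : 0 < P.real {ω | X ω = x}) (hA : MeasurableSet A) :
    max (max
          (P.real (U ⁻¹' A)
            - c / P.real {ω | X ω = x} * min (P.real (U ⁻¹' A)) (1 - P.real (U ⁻¹' A)))
          ((P.real (U ⁻¹' A) - 1) / P.real {ω | X ω = x} + 1))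
        0 ≤
      P.real (U ⁻¹' A ∩ {ω | X ω = x}) / P.real {ω | X ω = x} := by
  refine max_le (max_le ?_ ?_) (by positivity)
  · have hcov := hdep.abs_eventCov_le_mul_min hU hX hX01 hx hA
    rw [eventCov_comm] at hcov
    rw [div_mul_eq_mul_div]
    exact sub_div_le_measureReal_inter_div hpx (neg_le_of_abs_le hcov)
  · exact sub_one_div_add_one_le_measureReal_inter_div (hX (measurableSet_singleton x)) hpx

end BinaryVariable

/-- Theorem 1 (lower cdf bound): under `c`-dependence, for each `x ∈ {0,1}` and all `u`,
`P(U ≤ u ∣ X = x) ≥ max { F_U(u) - (c/p_x) min{F_U(u), 1-F_U(u)}, (F_U(u)-1)/p_x + 1, 0 }`. -/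
theorem cdf_lower_bound_c_dep {Ω : Type*} [MeasurableSpace Ω]
    (P : Measure Ω) [IsProbabilityMeasure P]
    (U : Ω → ℝ) (X : Ω → ℕ) (hU : Measurable U) (hX : Measurable X)
    (hX01 : ∀ ω, X ω ≤ 1)
    (hFcont : Continuous fun u : ℝ => (P {ω | U ω ≤ u}).toReal)
    (hp1 : (P {ω | X ω = 1}).toReal ∈ Set.Ioo (0:ℝ) 1)
    (c : ℝ) (hc : c ∈ Set.Icc (0:ℝ) 1)
    (hdep : CDep P X U c) :
    ∀ x : ℕ, x ≤ 1 → ∀ u : ℝ,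
      max (max
            ((P {ω | U ω ≤ u}).toReal
              - c / (P {ω | X ω = x}).toReal
                * min (P {ω | U ω ≤ u}).toReal (1 - (P {ω | U ω ≤ u}).toReal))
            (((P {ω | U ω ≤ u}).toReal - 1) / (P {ω | X ω = x}).toReal + 1))
          0 ≤
        (P ({ω | U ω ≤ u} ∩ {ω | X ω = x})).toReal / (P {ω | X ω = x}).toReal :=
  fun _ hx _ => cdf_lower_bound_c_dep_general hU hX hX01 hdep hx
    (measureReal_setOf_eq_pos hX hX01 hp1 hx) measurableSet_Iic
end
end

section
/- Fix x ∈ {0,1}, a continuous strictly increasing cdf G on an interval [a, b] (with −∞ ≤ a < b ≤ ∞), p_x ∈ (0,1), c ∈ (0,1], a point y ∈ (a, b), and a number e with max{ p_x G(y)/(p_x + c), ((p_x G(y) − c)/(p_x − c))·1(p_x > c), p_x G(y) } < e < min{ (p_x G(y)/(p_x − c))·1(p_x > c) + 1(p_x ≤ c), (p_x G(y) + c)/(p_x + c), p_x G(y) + (1 − p_x) }. Then there exist, on some probability space, a real random variable V and a {0,1}-valued random variable X such that: P(X = x) = p_x; P(V ≤ y' | X = x) = G(y') for all y'; for each x' ∈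 {0,1} the conditional cdf of V given X = x' is continuous and strictly increasing on its support and supp(V | X = x') = supp(V) = [a, b]; X is c-dependent with V; and P(V ≤ y) = e. -/
open MeasureTheory Set

noncomputable section

/-- The conditional cdf `y ↦ P(V ≤ y ∣ X = x)`. -/
def condCDF' {Ω : Type*} [MeasurableSpace Ω] (P : Measure Ω) (X : Ω → ℕ) (V : Ω → ℝ)
    (x : ℕ) (y : ℝ) : ℝ :=
  (P ({ω | V ω ≤ y} ∩ {ω | X ω = x})).toReal / (P {ω | X ω = x}).toReal

/-!
Let `μ` be the law with cdf `G`, and look only at the two-by-two table of the label `X` and the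
event `V ≤ y`. Given each label, let `V` lie at most at `y` with a prescribed probability, and
distribute it on either side of `y` like `μ` conditioned to that side. Given the label `x` this
probability is `G y`, which gives back `μ`; given the other label it must be
`t = (e - p_x G(y)) / (1 - p_x)` for `P(V ≤ y) = e` to hold. Rescaling `G` on either side of `y`
preserves continuity, strict monotonicity and the support as long as `0 < t < 1`. The posterior
probability of a label given `V` is constant on either side of `y`: for the label `x` it is
`p_x G(y) / e` below and `p_x (1 - G(y)) / (1 - e)` above. The bounds on `e` say that
`0 < t < 1` and that these two posteriors are within `c` of `p_x`.
-/

open ProbabilityTheory Filter Topology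
open scoped unitInterval

section MeasureMix

variable {α ι : Type*} [MeasurableSpace α] [MeasurableSpace ι]

/-- The mixture `t ν₁ + (1 - t) ν₂` of two measures. The weight lives in the unit interval so that
mixtures of probability measures are probability measures by instance search. -/
def measureMix (ν₁ ν₂ : Measure α) (t : I) : Measure α :=
  unitInterval.toNNReal t • ν₁ + unitInterval.toNNReal (σ t) • ν₂

lemma measureMix_apply (ν₁ ν₂ : Measure α) (t : I) (A : Set α) :
    measureMix ν₁ ν₂ t A =
      unitInterval.toNNReal t * ν₁ A + unitInterval.toNNReal (σ t) * ν₂ A := rfl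

instance (ν₁ ν₂ : Measure α) [IsProbabilityMeasure ν₁] [IsProbabilityMeasure ν₂] (t : I) :
    IsProbabilityMeasure (measureMix ν₁ ν₂ t) where
  measure_univ := by
    rw [measureMix_apply, measure_univ, measure_univ, mul_one, mul_one, ← ENNReal.coe_add,
      unitInterval.toNNReal_add_toNNReal_symm, ENNReal.coe_one]

lemma measureMix_real_apply (ν₁ ν₂ : Measure α) [IsFiniteMeasure ν₁] [IsFiniteMeasure ν₂]
    (t : I) (A : Set α) :
    (measureMix ν₁ ν₂ t).real A = t * ν₁.real A + (1 - t) * ν₂.real A := by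
  rw [measureReal_def, measureMix_apply, ENNReal.toReal_add (by finiteness) (by finiteness)]
  simp [measureReal_def]

lemma setIntegral_measureMix_of_ae_eq_const {ν₁ ν₂ : Measure α} [IsFiniteMeasure ν₁]
    [IsFiniteMeasure ν₂] {g : α → ℝ} {r₁ r₂ : ℝ} (h₁ : g =ᵐ[ν₁] fun _ => r₁)
    (h₂ : g =ᵐ[ν₂] fun _ => r₂) (t : I) (A : Set α) :
    ∫ v in A, g v ∂measureMix ν₁ ν₂ t = t * r₁ * ν₁.real A + (1 - t) * r₂ * ν₂.real A := by
  have h₁A : g =ᵐ[ν₁.restrict A] fun _ => r₁ := ae_restrict_of_ae h₁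
  have h₂A : g =ᵐ[ν₂.restrict A] fun _ => r₂ := ae_restrict_of_ae h₂
  have hi₁ : Integrable g (ν₁.restrict A) := (integrable_const r₁).congr h₁A.symm
  have hi₂ : Integrable g (ν₂.restrict A) := (integrable_const r₂).congr h₂A.symm
  rw [measureMix, Measure.restrict_add, Measure.restrict_smul, Measure.restrict_smul,
    integral_add_measure hi₁.smul_measure_nnreal hi₂.smul_measure_nnreal,
    integral_smul_nnreal_measure, integral_smul_nnreal_measure, integral_congr_ae h₁A,
    integral_congr_ae h₂A, setIntegral_const, setIntegral_const]
  simp only [NNReal.smul_def, unitInterval.coe_toNNReal, unitInterval.coe_symm_eq, smul_eq_mul]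
  ring

variable [Countable ι] [MeasurableSingletonClass ι]

/-- The Markov kernel sending a label `i` to the mixture of `ν₁` and `ν₂` with weight `τ i`. -/
def mixKernel (ν₁ ν₂ : Measure α) (τ : ι → I) : Kernel ι α :=
  Kernel.ofFunOfCountable fun i => measureMix ν₁ ν₂ (τ i)

instance (ν₁ ν₂ : Measure α) [IsProbabilityMeasure ν₁] [IsProbabilityMeasure ν₂] (τ : ι → I) :
    IsMarkovKernel (mixKernel ν₁ ν₂ τ) :=
  ⟨fun i => inferInstanceAs (IsProbabilityMeasure (measureMix ν₁ ν₂ (τ i)))⟩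

lemma mixKernel_comp (π : Measure ι) [IsProbabilityMeasure π] (ν₁ ν₂ : Measure α)
    [IsProbabilityMeasure ν₁] [IsProbabilityMeasure ν₂] (τ : ι → I) {e : I}
    (he : ∫ i, (τ i : ℝ) ∂π = e) :
    mixKernel ν₁ ν₂ τ ∘ₘ π = measureMix ν₁ ν₂ e := by
  have hτ : Integrable (fun i => (τ i : ℝ)) π :=
    .of_mem_Icc 0 1 (measurable_of_countable _).aemeasurable (ae_of_all _ fun i => (τ i).2)
  ext A hA
  rw [← ENNReal.toReal_eq_toReal_iff' (by finiteness) (by finiteness)]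
  calc ((mixKernel ν₁ ν₂ τ ∘ₘ π) A).toReal
      = ∫ i, (measureMix ν₁ ν₂ (τ i)).real A ∂π := by
        rw [Measure.bind_apply hA (Kernel.aemeasurable _)]
        exact (integral_toReal (Kernel.measurable_coe _ hA).aemeasurable
          (ae_of_all _ fun i => measure_lt_top _ _)).symm
    _ = ∫ i, (τ i * ν₁.real A + (1 - τ i) * ν₂.real A) ∂π := by
        simp only [measureMix_real_apply]
    _ = e * ν₁.real A + (1 - e) * ν₂.real A := by
        have hτ' : Integrable (fun i => 1 - (τ i : ℝ)) π := (integrable_const 1).sub hτ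
        rw [integral_add (hτ.mul_const _) (hτ'.mul_const _), integral_mul_const,
          integral_mul_const, integral_sub (integrable_const 1) hτ, he, integral_const,
          probReal_univ, one_smul]
    _ = (measureMix ν₁ ν₂ e).real A := (measureMix_real_apply ..).symm

end MeasureMix

section Label

lemma compProd_real_singleton_prod {α ι : Type*} [MeasurableSpace α] [MeasurableSpace ι]
    [MeasurableSingletonClass ι] (π : Measure ι) [SFinite π] (κ : Kernel ι α)
    [IsSFiniteKernel κ] (i : ι) {A : Set α} (hA : MeasurableSet A) :
    (π ⊗ₘ κ).real ({i} ×ˢ A) = π.real {i} * (κ i).real A := by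
  simp [measureReal_def, Measure.compProd_apply_prod (measurableSet_singleton i) hA, mul_comm]

variable {n : ℕ} (π : Measure (Fin n)) [SFinite π] (κ : Kernel (Fin n) ℝ) [IsMarkovKernel κ]

lemma compProd_real_label_inter (i : Fin n) {A : Set ℝ} (hA : MeasurableSet A) :
    (π ⊗ₘ κ).real ({ω | (ω.1 : ℕ) = i} ∩ Prod.snd ⁻¹' A) = π.real {i} * (κ i).real A := by
  rw [← compProd_real_singleton_prod π κ i hA]
  congr 1
  ext ω
  simp [Fin.val_inj]

lemma compProd_real_label (i : Fin n) :
    (π ⊗ₘ κ).real {ω | (ω.1 : ℕ) = i} = π.real {i} := by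
  simpa using compProd_real_label_inter π κ i MeasurableSet.univ

lemma condCDF'_compProd {i : Fin n} (hi : π.real {i} ≠ 0) (z : ℝ) :
    condCDF' (π ⊗ₘ κ) (fun ω => ω.1) Prod.snd i z = (κ i).real (Iic z) := by
  have hnum := compProd_real_label_inter π κ i (measurableSet_Iic (a := z))
  rw [inter_comm] at hnum
  calc condCDF' (π ⊗ₘ κ) (fun ω => ω.1) Prod.snd i z
      = π.real {i} * (κ i).real (Iic z) / π.real {i} :=
        congrArg₂ (· / ·) hnum (compProd_real_label π κ i)
    _ = (κ i).real (Iic z) := mul_div_cancel_left₀ _ hi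

end Label

lemma measureReal_singleton_mul_div_integral_mem {ι : Type*} [MeasurableSpace ι]
    [MeasurableSingletonClass ι] {π : Measure ι} {f : ι → ℝ} (hf : Integrable f π) (hf₀ : 0 ≤ f)
    (i : ι) : π.real {i} * f i / ∫ j, f j ∂π ∈ I := by
  refine unitInterval.div_mem (mul_nonneg measureReal_nonneg (hf₀ i)) (integral_nonneg hf₀) ?_
  simpa [measureReal_def] using setIntegral_le_integral (s := {i}) hf (ae_of_all _ hf₀)

lemma abs_posterior_sub_prior_eq {π : Measure (Fin 2)} [IsProbabilityMeasure π] {f : Fin 2 → ℝ}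
    {s : ℝ} (hs : s ≠ 0) (hf : ∫ i, f i ∂π = s) (i j : Fin 2) :
    |π.real {i} * f i / s - π.real {i}| = |π.real {j} * f j / s - π.real {j}| := by
  have hπ : ∑ i, π.real {i} = 1 := by simp
  rw [integral_fintype .of_finite] at hf
  simp only [smul_eq_mul, Fin.sum_univ_two] at hf hπ
  have h : π.real {0} * f 0 / s - π.real {0} = -(π.real {1} * f 1 / s - π.real {1}) := by
    field_simp
    linear_combination hf - s * hπ
  have h₀₁ : |π.real {0} * f 0 / s - π.real {0}| = |π.real {1} * f 1 / s - π.real {1}| := by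
    rw [h, abs_neg]
  fin_cases i <;> fin_cases j <;> simp [h₀₁]

lemma exists_measurable_ae_eq_const_of_mutuallySingular {α β : Type*} [MeasurableSpace α]
    [MeasurableSpace β] {ν₁ ν₂ : Measure α} (hν : ν₁ ⟂ₘ ν₂) (r₁ r₂ : β) :
    ∃ g : α → β, Measurable g ∧ (∀ v, g v = r₁ ∨ g v = r₂) ∧
      (g =ᵐ[ν₁] fun _ => r₁) ∧ g =ᵐ[ν₂] fun _ => r₂ := by
  classical
  refine ⟨hν.nullSet.piecewise (fun _ => r₂) (fun _ => r₁),
    .piecewise hν.measurableSet_nullSet measurable_const measurable_const, fun v => ?_, ?_, ?_⟩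
  · by_cases hv : v ∈ hν.nullSet <;> simp [hv]
  · filter_upwards [measure_eq_zero_iff_ae_notMem.1 hν.measure_nullSet] with v hv
    exact piecewise_eq_of_notMem _ _ _ hv
  · filter_upwards [measure_eq_zero_iff_ae_notMem.1 hν.measure_compl_nullSet] with v hv
    exact piecewise_eq_of_mem _ _ _ (not_not.1 hv)

theorem cDep_compProd_mixKernel (π : Measure (Fin 2)) [IsProbabilityMeasure π]
    {ν₁ ν₂ : Measure ℝ} [IsProbabilityMeasure ν₁] [IsProbabilityMeasure ν₂] (hν : ν₁ ⟂ₘ ν₂)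
    (τ : Fin 2 → I) {e : I} (he : (e : ℝ) ∈ Ioo 0 1) (hτ : ∫ i, (τ i : ℝ) ∂π = e) {c : ℝ}
    (i : Fin 2) (h₁ : |π.real {i} * τ i / e - π.real {i}| ≤ c)
    (h₂ : |π.real {i} * (1 - τ i) / (1 - e) - π.real {i}| ≤ c) :
    CDep (π ⊗ₘ mixKernel ν₁ ν₂ τ) (fun ω => ω.1) Prod.snd c := by
  have he₁ : 0 < 1 - (e : ℝ) := sub_pos.mpr he.2
  have hlaw : (π ⊗ₘ mixKernel ν₁ ν₂ τ).map Prod.snd = measureMix ν₁ ν₂ e := by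
    rw [← mixKernel_comp π ν₁ ν₂ τ hτ, ← Measure.snd_compProd, Measure.snd]
  have hσ : ∫ i, (1 - τ i : ℝ) ∂π = 1 - e := by
    rw [integral_sub .of_finite .of_finite, hτ, integral_const, probReal_univ, one_smul]
  have hr₁ : π.real {1} * τ 1 / e ∈ I :=
    hτ ▸ measureReal_singleton_mul_div_integral_mem .of_finite (fun i => (τ i).2.1) 1
  have hr₂ : π.real {1} * (1 - τ 1) / (1 - e) ∈ I :=
    hσ ▸ measureReal_singleton_mul_div_integral_mem (f := fun i => 1 - (τ i : ℝ)) .of_finite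
      (fun i => sub_nonneg.2 (τ i).2.2) 1
  obtain ⟨g, hg, hg_range, hg₁, hg₂⟩ := exists_measurable_ae_eq_const_of_mutuallySingular hν
    (π.real {1} * τ 1 / e) (π.real {1} * (1 - τ 1) / (1 - e))
  refine ⟨g, hg, fun v => ?_, fun A hA => ?_, ae_of_all _ fun v => ?_⟩
  · rcases hg_range v with h | h <;> rw [h]
    exacts [hr₁, hr₂]
  · calc (π ⊗ₘ mixKernel ν₁ ν₂ τ).real ({ω | (ω.1 : ℕ) = (1 : Fin 2)} ∩ Prod.snd ⁻¹' A)
        = π.real {1} * (τ 1 * ν₁.real A + (1 - τ 1) * ν₂.real A) := by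
          rw [compProd_real_label_inter _ _ _ hA]
          exact congrArg _ (measureMix_real_apply ..)
      _ = e * (π.real {1} * τ 1 / e) * ν₁.real A +
            (1 - e) * (π.real {1} * (1 - τ 1) / (1 - e)) * ν₂.real A := by
          rw [mul_div_cancel₀ _ he.1.ne', mul_div_cancel₀ _ he₁.ne']
          ring
      _ = ∫ v in A, g v ∂(π ⊗ₘ mixKernel ν₁ ν₂ τ).map Prod.snd := by
          rw [hlaw, setIntegral_measureMix_of_ae_eq_const hg₁ hg₂]
  · have hlabel : ((π ⊗ₘ mixKernel ν₁ ν₂ τ) {ω | (ω.1 : ℕ) = 1}).toReal = π.real {1} :=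
      compProd_real_label π (mixKernel ν₁ ν₂ τ) 1
    rcases hg_range v with h | h <;> rw [hlabel, h]
    exacts [(abs_posterior_sub_prior_eq he.1.ne' hτ 1 i).trans_le h₁,
      (abs_posterior_sub_prior_eq he₁.ne' hσ 1 i).trans_le h₂]

lemma abs_div_sub_le_iff {a p c s : ℝ} (hs : 0 < s) :
    |a / s - p| ≤ c ↔ (p - c) * s ≤ a ∧ a ≤ (p + c) * s := by
  rw [abs_sub_le_iff, sub_le_iff_le_add', sub_le_comm, le_div_iff₀ hs, div_le_iff₀ hs, and_comm]

lemma abs_posterior_sub_le_of_bounds {p q c e : ℝ} (hp : 0 < p) (hc : 0 < c) (hq : q ∈ Icc 0 1)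
    (he : e ∈ Ioo 0 1)
    (hl : max (p * q / (p + c)) (if c < p then (p * q - c) / (p - c) else 0) ≤ e)
    (hu : e ≤ min (if c < p then p * q / (p - c) else 1) ((p * q + c) / (p + c))) :
    |p * q / e - p| ≤ c ∧ |p * (1 - q) / (1 - e) - p| ≤ c := by
  have hpc : 0 < p + c := add_pos hp hc
  rw [abs_div_sub_le_iff he.1, abs_div_sub_le_iff (sub_pos.2 he.2)]
  obtain ⟨hl₁, hl₂⟩ := max_le_iff.1 hl
  obtain ⟨hu₁, hu₂⟩ := le_min_iff.1 hu
  rw [div_le_iff₀ hpc] at hl₁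
  rw [le_div_iff₀ hpc] at hu₂
  have hl₂' : p * q - c ≤ e * (p - c) := by
    split_ifs at hl₂ with h
    · rwa [div_le_iff₀ (sub_pos.2 h)] at hl₂
    · nlinarith [mul_nonneg (sub_nonneg.2 (not_lt.1 h)) (sub_nonneg.2 he.2.le),
        mul_nonneg hp.le (sub_nonneg.2 hq.2)]
  have hu₁' : e * (p - c) ≤ p * q := by
    split_ifs at hu₁ with h
    · rwa [le_div_iff₀ (sub_pos.2 h)] at hu₁
    · nlinarith [mul_nonneg (sub_nonneg.2 (not_lt.1 h)) he.1.le, mul_nonneg hp.le hq.1]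
  refine ⟨⟨?_, ?_⟩, ?_, ?_⟩ <;> linarith

section Cdf

lemma cond_mutuallySingular_cond_compl {α : Type*} [MeasurableSpace α] (μ : Measure α) {S : Set α}
    (hS : MeasurableSet S) : μ[|S] ⟂ₘ μ[|Sᶜ] := by
  refine ⟨Sᶜ, hS.compl, ?_, ?_⟩
  · rw [cond_apply hS, inter_compl_self, measure_empty, mul_zero]
  · rw [cond_apply hS.compl, inter_compl_self, measure_empty, mul_zero]

variable {μ : Measure ℝ} [IsProbabilityMeasure μ]

lemma isProbabilityMeasure_cond_Iic {y : ℝ} (hy : cdf μ y ≠ 0) :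
    IsProbabilityMeasure μ[|Iic y] :=
  cond_isProbabilityMeasure fun h => hy <| by
    rw [cdf_eq_real, measureReal_def, h, ENNReal.toReal_zero]

lemma isProbabilityMeasure_cond_compl_Iic {y : ℝ} (hy : cdf μ y ≠ 1) :
    IsProbabilityMeasure μ[|(Iic y)ᶜ] :=
  cond_isProbabilityMeasure fun h => hy <| by
    rwa [prob_compl_eq_zero_iff measurableSet_Iic, ← ENNReal.toReal_eq_one_iff, ← measureReal_def,
      ← cdf_eq_real] at h

variable (μ)

lemma cond_Iic_real_Iic (y z : ℝ) : μ[|Iic y].real (Iic z) = cdf μ (min z y) / cdf μ y := by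
  rw [measureReal_def, cond_apply measurableSet_Iic, Iic_inter_Iic, ENNReal.toReal_mul,
    ENNReal.toReal_inv, cdf_eq_real, cdf_eq_real, measureReal_def, measureReal_def, min_comm,
    div_eq_inv_mul]

lemma cond_compl_Iic_real_Iic (y z : ℝ) :
    μ[|(Iic y)ᶜ].real (Iic z) = (cdf μ (max z y) - cdf μ y) / (1 - cdf μ y) := by
  have hdiff : (Iic y)ᶜ ∩ Iic z = Iic (max z y) \ Iic y := by
    ext v
    simp only [mem_inter_iff, mem_compl_iff, mem_Iic, Set.mem_sdiff, le_max_iff]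
    tauto
  rw [measureReal_def, cond_apply measurableSet_Iic.compl, hdiff, ENNReal.toReal_mul,
    ENNReal.toReal_inv, ← measureReal_def, ← measureReal_def,
    probReal_compl_eq_one_sub measurableSet_Iic,
    measureReal_sdiff (Iic_subset_Iic.2 (le_max_right z y)) measurableSet_Iic,
    cdf_eq_real, cdf_eq_real, div_eq_inv_mul]

/-- The cdf obtained from a cdf `G` by rescaling it on either side of `y` so that its value at `y`
becomes `t`: the cdf of the mixture with weight `t` of the law with cdf `G` conditioned to lie at
most at `y` and of the same law conditioned to lie above `y`. -/
def splicedCDF (G : ℝ → ℝ) (y t z : ℝ) : ℝ :=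
  t * (G (min z y) / G y) + (1 - t) * ((G (max z y) - G y) / (1 - G y))

lemma measureMix_cond_Iic_real_Iic (y z : ℝ) (t : I) :
    (measureMix μ[|Iic y] μ[|(Iic y)ᶜ] t).real (Iic z) = splicedCDF (cdf μ) y t z := by
  rw [measureMix_real_apply, cond_Iic_real_Iic, cond_compl_Iic_real_Iic, splicedCDF]

variable {G : ℝ → ℝ} {y t : ℝ}

lemma splicedCDF_self (hG : G y ≠ 0) : splicedCDF G y t y = t := by
  simp [splicedCDF, hG]

lemma splicedCDF_apply_self (hGy : G y ∈ Ioo 0 1) : splicedCDF G y (G y) = G := by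
  ext z
  rw [splicedCDF, mul_div_cancel₀ _ hGy.1.ne', mul_div_cancel₀ _ (sub_pos.2 hGy.2).ne']
  rcases le_total z y with h | h <;> simp [h]

lemma continuous_splicedCDF (hG : Continuous G) : Continuous (splicedCDF G y t) := by
  unfold splicedCDF
  fun_prop

lemma strictMonoOn_splicedCDF {D : Set ℝ} (hG : StrictMonoOn G D) (hy : y ∈ D)
    (hGy : G y ∈ Ioo 0 1) (ht : t ∈ Ioo 0 1) : StrictMonoOn (splicedCDF G y t) D := by
  intro z hz w hw hzw
  have ht₁ : 0 < 1 - t := sub_pos.2 ht.2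
  have hGy₁ : 0 < 1 - G y := sub_pos.2 hGy.2
  unfold splicedCDF
  rcases lt_or_ge z y with hzy | hyz
  · have hmin : G (min z y) < G (min w y) := by
      rw [min_eq_left hzy.le]
      exact hG hz (min_rec' (· ∈ D) hw hy) (lt_min hzw hzy)
    have hmax : G (max z y) ≤ G (max w y) := by
      rw [max_eq_right hzy.le]
      exact hG.monotoneOn hy (max_rec' (· ∈ D) hw hy) (le_max_right w y)
    exact add_lt_add_of_lt_of_le
      (mul_lt_mul_of_pos_left (div_lt_div_of_pos_right hmin hGy.1) ht.1) (by gcongr)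
  · rw [min_eq_right hyz, min_eq_right (hyz.trans hzw.le), max_eq_left hyz,
      max_eq_left (hyz.trans hzw.le)]
    gcongr
    exact hG hz hw hzw

lemma splicedCDF_of_eq_zero {z : ℝ} (hzy : z ≤ y) (hz : G z = 0) : splicedCDF G y t z = 0 := by
  simp [splicedCDF, hzy, hz]

lemma splicedCDF_of_eq_one {z : ℝ} (hyz : y ≤ z) (hGy : G y ∈ Ioo 0 1) (hz : G z = 1) :
    splicedCDF G y t z = 1 := by
  simp [splicedCDF, hyz, hz, hGy.1.ne', (sub_pos.2 hGy.2).ne']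

end Cdf

section EReal

variable {G : ℝ → ℝ} {a b : EReal}

lemma monotone_of_monotoneOn_ereal_Icc (hab : a < b)
    (hG : MonotoneOn G {z : ℝ | a ≤ (z : EReal) ∧ (z : EReal) ≤ b})
    (hG0 : ∀ z : ℝ, (z : EReal) ≤ a → G z = 0)
    (hG1 : ∀ z : ℝ, b ≤ (z : EReal) → G z = 1) : Monotone G := by
  intro s t hst
  have hst' : (s : EReal) ≤ t := EReal.coe_le_coe_iff.2 hst
  rcases le_total (s : EReal) a with hsa | has <;> rcases le_total (t : EReal) b with htb | hbt
  · lift a to ℝ using ⟨hab.ne_top, ((EReal.bot_lt_coe s).trans_le hsa).ne'⟩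
    rw [hG0 s hsa]
    rcases le_total (t : EReal) a with hta | hat
    · rw [hG0 t hta]
    · rw [← hG0 a le_rfl]
      exact hG ⟨le_rfl, hab.le⟩ ⟨hat, htb⟩ (EReal.coe_le_coe_iff.1 hat)
  · rw [hG0 s hsa, hG1 t hbt]
    exact zero_le_one
  · exact hG ⟨has, hst'.trans htb⟩ ⟨has.trans hst', htb⟩ hst
  · lift b to ℝ using ⟨(hbt.trans_lt (EReal.coe_lt_top t)).ne, (bot_le.trans_lt hab).ne'⟩
    rw [hG1 t hbt]
    rcases le_total (s : EReal) b with hsb | hbs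
    · rw [← hG1 b le_rfl]
      exact hG ⟨has, hsb⟩ ⟨hab.le, le_rfl⟩ (EReal.coe_le_coe_iff.1 hsb)
    · rw [hG1 s hbs]

lemma mem_Ioo_of_strictMonoOn_ereal_Icc
    (hG : StrictMonoOn G {z : ℝ | a ≤ (z : EReal) ∧ (z : EReal) ≤ b}) {l u : ℝ}
    (hG_range : ∀ z, G z ∈ Icc l u) {y : ℝ} (hy : a < (y : EReal) ∧ (y : EReal) < b) :
    G y ∈ Ioo l u := by
  obtain ⟨s, has, hsy⟩ := EReal.lt_iff_exists_real_btwn.1 hy.1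
  obtain ⟨t, hyt, htb⟩ := EReal.lt_iff_exists_real_btwn.1 hy.2
  have hyD : a ≤ (y : EReal) ∧ (y : EReal) ≤ b := ⟨hy.1.le, hy.2.le⟩
  exact ⟨(hG_range s).1.trans_lt <|
      hG ⟨has.le, (hsy.trans hy.2).le⟩ hyD (EReal.coe_lt_coe_iff.1 hsy),
    (hG hyD ⟨(hy.1.trans hyt).le, htb.le⟩ (EReal.coe_lt_coe_iff.1 hyt)).trans_le (hG_range t).2⟩

end EReal

lemma exists_isProbabilityMeasure_cdf_eq {G : ℝ → ℝ} (hG : Monotone G)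
    (hGc : ∀ z, ContinuousWithinAt G (Ici z) z) (hGbot : Tendsto G atBot (𝓝 0))
    (hGtop : Tendsto G atTop (𝓝 1)) : ∃ μ : Measure ℝ, IsProbabilityMeasure μ ∧ ⇑(cdf μ) = G := by
  let f : StieltjesFunction ℝ := ⟨G, hG, hGc⟩
  exact ⟨f.measure, f.isProbabilityMeasure hGbot hGtop,
    congrArg _ (cdf_measure_stieltjesFunction f hGbot hGtop)⟩

lemma exists_mem_Ioo_convexComb_eq {p u e : ℝ} (hp : p < 1) (he : e ∈ Ioo u (u + (1 - p))) :
    ∃ t ∈ Ioo (0 : ℝ) 1, u + (1 - p) * t = e := by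
  have hp₁ : 0 < 1 - p := sub_pos.2 hp
  refine ⟨(e - u) / (1 - p), ⟨div_pos (sub_pos.2 he.1) hp₁, ?_⟩, ?_⟩
  · rw [div_lt_one hp₁]
    linarith [he.2]
  · rw [mul_div_cancel₀ _ hp₁.ne']
    ring

lemma exists_isProbabilityMeasure_fin_two_singleton (x : Fin 2) {p : ℝ} (hp : p ∈ Ioo 0 1) :
    ∃ π : Measure (Fin 2), IsProbabilityMeasure π ∧ π.real {x} = p ∧ ∀ i, π.real {i} ≠ 0 := by
  lift p to I using Ioo_subset_Icc_self hp
  obtain ⟨j, hj⟩ := exists_ne x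
  have hx : Ber(x, j, p).real {x} = p :=
    bernoulliMeasure_real_apply_of_mem_of_notMem p (measurableSet_singleton x)
      (mem_singleton x) hj
  refine ⟨Ber(x, j, p), inferInstance, hx, fun i => ?_⟩
  rcases eq_or_ne i x with rfl | hi
  · exact hx.trans_ne hp.1.ne'
  · obtain rfl : i = j := by omega
    rw [bernoulliMeasure_real_apply_of_notMem_of_mem p (measurableSet_singleton i) hi.symm
      (mem_singleton i)]
    exact (sub_pos.2 hp.2).ne'

lemma integral_ite_eq_convexComb {ι : Type*} [MeasurableSpace ι] [MeasurableSingletonClass ι]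
    [DecidableEq ι] (π : Measure ι) [IsProbabilityMeasure π] (x : ι) (q t : ℝ) :
    ∫ i, (if i = x then q else t) ∂π = π.real {x} * q + (1 - π.real {x}) * t := by
  have hx : MeasurableSet ({x} : Set ι) := measurableSet_singleton x
  rw [← probReal_compl_eq_one_sub hx]
  exact (integral_piecewise hx (f := fun _ => q) (g := fun _ => t) (integrable_const q).integrableOn
    (integrable_const t).integrableOn).trans (by simp [measureReal_def])

lemma exists_weights_integral_eq {π : Measure (Fin 2)} [IsProbabilityMeasure π] {x : Fin 2}
    (hx : π.real {x} < 1) {q e : ℝ} (hq : q ∈ Ioo 0 1)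
    (he : e ∈ Ioo (π.real {x} * q) (π.real {x} * q + (1 - π.real {x}))) :
    ∃ τ : Fin 2 → I, τ x = q ∧ (∀ i, (τ i : ℝ) ∈ Ioo 0 1) ∧ ∫ i, (τ i : ℝ) ∂π = e := by
  obtain ⟨t, ht, hte⟩ := exists_mem_Ioo_convexComb_eq hx he
  have hτ (i : Fin 2) : (if i = x then q else t) ∈ Ioo 0 1 := ite_mem.2 ⟨fun _ => hq, fun _ => ht⟩
  exact ⟨fun i => ⟨if i = x then q else t, Ioo_subset_Icc_self (hτ i)⟩, if_pos rfl, hτ,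
    (integral_ite_eq_convexComb π x q t).trans hte⟩

lemma exists_weights_of_bounds {π : Measure (Fin 2)} [IsProbabilityMeasure π] {x : Fin 2}
    {p q c e : ℝ} (hx : π.real {x} = p) (hp : p ∈ Ioo 0 1) (hq : q ∈ Ioo 0 1) (hc : 0 < c)
    (hl : max (max (p * q / (p + c)) (if c < p then (p * q - c) / (p - c) else 0)) (p * q) < e)
    (hu : e < min (min (if c < p then p * q / (p - c) else 1) ((p * q + c) / (p + c)))
      (p * q + (1 - p))) :
    ∃ τ : Fin 2 → I, τ x = q ∧ (∀ i, (τ i : ℝ) ∈ Ioo 0 1) ∧ e ∈ Ioo 0 1 ∧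
      ∫ i, (τ i : ℝ) ∂π = e ∧ |p * τ x / e - p| ≤ c ∧ |p * (1 - τ x) / (1 - e) - p| ≤ c := by
  subst hx
  obtain ⟨hl_posterior, hl_weight⟩ := max_lt_iff.1 hl
  obtain ⟨hu_posterior, hu_weight⟩ := lt_min_iff.1 hu
  have he : e ∈ Ioo 0 1 :=
    ⟨(mul_pos hp.1 hq.1).trans hl_weight, by linarith [mul_lt_of_lt_one_right hp.1 hq.2]⟩
  obtain ⟨τ, hτx, hτ, hτe⟩ := exists_weights_integral_eq hp.2 hq ⟨hl_weight, hu_weight⟩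
  refine ⟨τ, hτx, hτ, he, hτe, ?_⟩
  rw [hτx]
  exact abs_posterior_sub_le_of_bounds hp.1 hc (Ioo_subset_Icc_self hq) he hl_posterior.le
    hu_posterior.le

section JointLaw

/-- The law of a label with law `π` and a real value which, given the label `i`, lies at most at
`y` with probability `τ i` and is distributed as `μ` conditionally on the side of `y` it is on. -/
def jointLaw {n : ℕ} (π : Measure (Fin n)) (μ : Measure ℝ) (y : ℝ) (τ : Fin n → I) :
    Measure (Fin n × ℝ) :=
  π ⊗ₘ mixKernel μ[|Iic y] μ[|(Iic y)ᶜ] τ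

variable {n : ℕ} (π : Measure (Fin n)) {μ : Measure ℝ} [IsProbabilityMeasure μ] {y : ℝ}
  (hy : cdf μ y ∈ Ioo 0 1) (τ : Fin n → I)

include hy

lemma isMarkovKernel_mixKernel_cond_Iic :
    IsMarkovKernel (mixKernel μ[|Iic y] μ[|(Iic y)ᶜ] τ) := by
  have := isProbabilityMeasure_cond_Iic hy.1.ne'
  have := isProbabilityMeasure_cond_compl_Iic hy.2.ne
  infer_instance

lemma condCDF'_jointLaw [SFinite π] {i : Fin n} (hi : π.real {i} ≠ 0) :
    condCDF' (jointLaw π μ y τ) (fun ω => ω.1) Prod.snd i = splicedCDF (cdf μ) y (τ i) := by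
  have := isMarkovKernel_mixKernel_cond_Iic hy τ
  ext z
  rw [jointLaw, condCDF'_compProd π _ hi, ← measureMix_cond_Iic_real_Iic]
  rfl

lemma jointLaw_real_label [SFinite π] (i : Fin n) :
    (jointLaw π μ y τ).real {ω | (ω.1 : ℕ) = i} = π.real {i} := by
  have := isMarkovKernel_mixKernel_cond_Iic hy τ
  exact compProd_real_label π _ i

variable [IsProbabilityMeasure π]

lemma isProbabilityMeasure_jointLaw : IsProbabilityMeasure (jointLaw π μ y τ) := by
  have := isMarkovKernel_mixKernel_cond_Iic hy τ
  exact inferInstanceAs (IsProbabilityMeasure (π ⊗ₘ _))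

lemma jointLaw_real_snd_le {e : I} (hτ : ∫ i, (τ i : ℝ) ∂π = e) :
    (jointLaw π μ y τ).real {ω | ω.2 ≤ y} = e := by
  have := isProbabilityMeasure_cond_Iic hy.1.ne'
  have := isProbabilityMeasure_cond_compl_Iic hy.2.ne
  calc (jointLaw π μ y τ).real {ω | ω.2 ≤ y}
      = (mixKernel μ[|Iic y] μ[|(Iic y)ᶜ] τ ∘ₘ π).real (Iic y) := by
        rw [← Measure.snd_compProd, Measure.snd,
          map_measureReal_apply measurable_snd measurableSet_Iic]
        rfl
    _ = e := by
        rw [mixKernel_comp π _ _ τ hτ, measureMix_cond_Iic_real_Iic, splicedCDF_self hy.1.ne']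

end JointLaw

theorem cDep_jointLaw (π : Measure (Fin 2)) [IsProbabilityMeasure π] {μ : Measure ℝ}
    [IsProbabilityMeasure μ] {y : ℝ} (hy : cdf μ y ∈ Ioo 0 1) (τ : Fin 2 → I) {e : I}
    (he : (e : ℝ) ∈ Ioo 0 1) (hτ : ∫ i, (τ i : ℝ) ∂π = e) {c : ℝ} (i : Fin 2)
    (h₁ : |π.real {i} * τ i / e - π.real {i}| ≤ c)
    (h₂ : |π.real {i} * (1 - τ i) / (1 - e) - π.real {i}| ≤ c) :
    CDep (jointLaw π μ y τ) (fun ω => ω.1) Prod.snd c := by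
  have := isProbabilityMeasure_cond_Iic hy.1.ne'
  have := isProbabilityMeasure_cond_compl_Iic hy.2.ne
  exact cDep_compProd_mixKernel π (cond_mutuallySingular_cond_compl μ measurableSet_Iic) τ he hτ i
    h₁ h₂

/-- Sharpness of the potential-outcome cdf bounds: any value `e` strictly between
the lower and the upper bound at a point `y` in the interior of the support is
attained by some joint distribution of `(V, X)` consistent with the observed
conditional cdf `G` of `V` given `X = x`, the marginal `P(X = x) = p_x`, the
support and continuity conditions, and `c`-dependence. -/
theorem potential_outcome_cdf_bounds_sharp
    (x : ℕ) (hx : x ≤ 1)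
    (a b : EReal) (hab : a < b)
    (G : ℝ → ℝ)
    (hGcont : Continuous G)
    (hGmono : StrictMonoOn G {z : ℝ | a ≤ (z : EReal) ∧ (z : EReal) ≤ b})
    (hG0 : ∀ z : ℝ, (z : EReal) ≤ a → G z = 0)
    (hG1 : ∀ z : ℝ, b ≤ (z : EReal) → G z = 1)
    (hGbot : Filter.Tendsto G Filter.atBot (nhds 0))
    (hGtop : Filter.Tendsto G Filter.atTop (nhds 1))
    (pxv : ℝ) (hpx : pxv ∈ Set.Ioo (0:ℝ) 1) (c : ℝ) (hc : c ∈ Set.Ioc (0:ℝ) 1)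
    (y : ℝ) (hy : a < (y : EReal) ∧ (y : EReal) < b)
    (e : ℝ)
    (he_lower : max (max (pxv * G y / (pxv + c))
        (if c < pxv then (pxv * G y - c) / (pxv - c) else 0)) (pxv * G y) < e)
    (he_upper : e < min (min
        (if c < pxv then pxv * G y / (pxv - c) else 1)
        ((pxv * G y + c) / (pxv + c))) (pxv * G y + (1 - pxv))) :
    ∃ (Ω : Type) (_ : MeasurableSpace Ω) (P : Measure Ω) (V : Ω → ℝ) (X : Ω → ℕ),
      IsProbabilityMeasure P ∧ Measurable V ∧ Measurable X ∧ (∀ ω, X ω ≤ 1) ∧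
      (P {ω | X ω = x}).toReal = pxv ∧
      (∀ y' : ℝ, condCDF' P X V x y' = G y') ∧
      (∀ x' : ℕ, x' ≤ 1 →
        Continuous (condCDF' P X V x') ∧
        StrictMonoOn (condCDF' P X V x') {z : ℝ | a ≤ (z : EReal) ∧ (z : EReal) ≤ b} ∧
        (∀ z : ℝ, (z : EReal) ≤ a → condCDF' P X V x' z = 0) ∧
        (∀ z : ℝ, b ≤ (z : EReal) → condCDF' P X V x' z = 1)) ∧
      CDep P X V c ∧
      (P {ω | V ω ≤ y}).toReal = e := by
  obtain ⟨x, rfl⟩ : ∃ i : Fin 2, (i : ℕ) = x := ⟨⟨x, Nat.lt_succ_of_le hx⟩, rfl⟩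
  obtain ⟨π, _, rfl, hπ⟩ := exists_isProbabilityMeasure_fin_two_singleton x hpx
  obtain ⟨μ, _, rfl⟩ := exists_isProbabilityMeasure_cdf_eq
    (monotone_of_monotoneOn_ereal_Icc hab hGmono.monotoneOn hG0 hG1)
    (fun _ => hGcont.continuousWithinAt) hGbot hGtop
  have hGy : cdf μ y ∈ Ioo 0 1 :=
    mem_Ioo_of_strictMonoOn_ereal_Icc hGmono (fun z => ⟨cdf_nonneg μ z, cdf_le_one μ z⟩) hy
  obtain ⟨τ, hτx, hτ, he, hτe, h₁, h₂⟩ :=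
    exists_weights_of_bounds rfl hpx hGy hc.1 he_lower he_upper
  lift e to I using Ioo_subset_Icc_self he
  have hF (i : Fin 2) := condCDF'_jointLaw π hGy τ (hπ i)
  refine ⟨_, _, jointLaw π μ y τ, Prod.snd, fun ω => ω.1, isProbabilityMeasure_jointLaw π hGy τ,
    measurable_snd, Measurable.of_discrete.comp measurable_fst, fun ω => Fin.is_le ω.1,
    jointLaw_real_label π hGy τ x, fun z => ?_, fun x' hx' => ?_,
    cDep_jointLaw π hGy τ he hτe x h₁ h₂, jointLaw_real_snd_le π hGy τ hτe⟩
  · rw [hF, hτx, splicedCDF_apply_self hGy]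
  · obtain ⟨i, rfl⟩ : ∃ i : Fin 2, (i : ℕ) = x' := ⟨⟨x', Nat.lt_succ_of_le hx'⟩, rfl⟩
    rw [hF]
    exact ⟨continuous_splicedCDF hGcont,
      strictMonoOn_splicedCDF hGmono ⟨hy.1.le, hy.2.le⟩ hGy (hτ i),
      fun z hz => splicedCDF_of_eq_zero (EReal.coe_le_coe_iff.1 (hz.trans hy.1.le)) (hG0 z hz),
      fun z hz => splicedCDF_of_eq_one (EReal.coe_le_coe_iff.1 (hy.2.le.trans hz)) hGy (hG1 z hz)⟩
end
end
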